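/- Suppose g(r) = o(r^{-c}) as r → ∞ for some c > d. Then almost surely, limsup_{n→∞} (α n d_n^d)/(log n) ≤ 1. -/

import Mathlib

open MeasureTheory ProbabilityTheory Filter Set

noncomputable section

namespace RCM

/-- The toroidal metric on the unit cube. -/
def torusDist {d : ℕ} (x y : EuclideanSpace ℝ (Fin d)) : ℝ :=
  ⨅ z : Fin d → ℤ, ‖x - y - (WithLp.equiv 2 (Fin d → ℝ)).symm (fun i => (z i : ℝ))‖

/-- The half-open unit cube `S = (-1/2, 1/2]^d`. -/
def cube (d : ℕ) : Set (EuclideanSpace ℝ (Fin d)) :=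
  {x | ∀ i, x i ∈ Set.Ioc (-(1/2) : ℝ) (1/2)}

/-- The random connection model: i.i.d. uniform points `X`, coupled Poisson counts `N`,
i.i.d. uniform edge variables `U`, with the three families mutually independent, and a
non-increasing connection function `g : [0,∞) → [0,1]` with finite positive integral `α`. -/
structure Model (d : ℕ) {Ω : Type*} [MeasurableSpace Ω] (P : Measure Ω) where
  g : ℝ → ℝ
  α : ℝ
  X : ℕ → Ω → EuclideanSpace ℝ (Fin d)
  N : ℕ → Ω → ℕ
  U : ℕ → ℕ → Ω → ℝ
  g_antitone : AntitoneOn g (Set.Ici 0)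
  g_mem : ∀ r : ℝ, 0 ≤ r → g r ∈ Set.Icc (0 : ℝ) 1
  g_integrable : MeasureTheory.Integrable (fun x : EuclideanSpace ℝ (Fin d) => g ‖x‖)
  α_def : α = ∫ x : EuclideanSpace ℝ (Fin d), g ‖x‖
  α_pos : 0 < α
  X_meas : ∀ i, Measurable (X i)
  X_unif : ∀ i : ℕ, 1 ≤ i → Measure.map (X i) P = volume.restrict (cube d)
  X_indep : iIndepFun
    (fun i : {i : ℕ // 1 ≤ i} => X i) P
  N_meas : ∀ n, Measurable (N n)
  N_mono : ∀ ω, Monotone fun n => N n ω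
  N_poisson : ∀ n k : ℕ,
    P {ω | N n ω = k} = ENNReal.ofReal (Real.exp (-(n : ℝ)) * (n : ℝ) ^ k / k.factorial)
  U_meas : ∀ i j, Measurable (U i j)
  U_unif : ∀ i j : ℕ, 1 ≤ i → i < j →
    Measure.map (U i j) P = volume.restrict (Set.Icc (0 : ℝ) 1)
  U_indep : iIndepFun
    (fun p : {p : ℕ × ℕ // 1 ≤ p.1 ∧ p.1 < p.2} => U p.1.1 p.1.2) P
  families_indep : iIndep
    (![MeasurableSpace.comap (fun ω => fun i : ℕ => X i ω) inferInstance,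
       MeasurableSpace.comap (fun ω => fun n : ℕ => N n ω) inferInstance,
       MeasurableSpace.comap (fun ω => fun p : ℕ × ℕ => U p.1 p.2 ω) inferInstance]) P

variable {d : ℕ} {Ω : Type*} [MeasurableSpace Ω] {P : Measure Ω}

/-- Adjacency in the graph `G_n(r)`: vertices `1 ≤ i,j ≤ N_n` are joined iff
`U_{ij} ≤ g(dist(X_i,X_j)/r)`. -/
def adj (M : Model d P) (n : ℕ) (r : ℝ) (ω : Ω) (i j : ℕ) : Prop :=
  i ≠ j ∧ 1 ≤ i ∧ 1 ≤ j ∧ i ≤ M.N n ω ∧ j ≤ M.N n ω ∧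
    M.U (min i j) (max i j) ω ≤ M.g (torusDist (M.X i ω) (M.X j ω) / r)

/-- The degree of vertex `i` in `G_n(r)`. -/
def deg (M : Model d P) (n : ℕ) (r : ℝ) (ω : Ω) (i : ℕ) : ℕ :=
  {j : ℕ | adj M n r ω i j}.ncard

/-- `W_n(r)`, the number of isolated vertices of `G_n(r)`. -/
def isolatedCount (M : Model d P) (n : ℕ) (r : ℝ) (ω : Ω) : ℕ :=
  {i : ℕ | 1 ≤ i ∧ i ≤ M.N n ω ∧ deg M n r ω i = 0}.ncard


/-- `r̂_n(γ)` defined by `r̂_n(γ)^d = γ log n / (α n)`. -/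
def rhat (M : Model d P) (γ : ℝ) (n : ℕ) : ℝ :=
  (γ * Real.log n / (M.α * n)) ^ ((1 : ℝ) / d)

/-- `d_n`, the critical parameter for absence of isolated nodes. -/
def critRadius (M : Model d P) (n : ℕ) (ω : Ω) : ℝ :=
  sInf {r : ℝ | 0 < r ∧ isolatedCount M n r ω = 0}

/-- The maximum vertex degree `Δ_n` of `G_n(r)`. -/
def maxDeg (M : Model d P) (n : ℕ) (r : ℝ) (ω : Ω) : ℕ :=
  (Finset.Icc 1 (M.N n ω)).sup (deg M n r ω)

/-- The minimum vertex degree `δ_n` of `G_n(r)`. -/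
def minDeg (M : Model d P) (n : ℕ) (r : ℝ) (ω : Ω) : ℕ :=
  sInf {k : ℕ | ∃ i, 1 ≤ i ∧ i ≤ M.N n ω ∧ deg M n r ω i = k}

/-- The length (toroidal metric) of the longest edge of `G_n(r)` (`0` if there are no edges). -/
def longestEdge (M : Model d P) (n : ℕ) (r : ℝ) (ω : Ω) : ℝ :=
  sSup ({0} ∪ {t : ℝ | ∃ i j, adj M n r ω i j ∧ t = torusDist (M.X i ω) (M.X j ω)})

/-- Connectivity of `G_n(r)`: any two vertices are joined by a path. -/
def connectedGraph (M : Model d P) (n : ℕ) (r : ℝ) (ω : Ω) : Prop :=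
  ∀ i j : ℕ, 1 ≤ i → i ≤ M.N n ω → 1 ≤ j → j ≤ M.N n ω →
    Relation.ReflTransGen (adj M n r ω) i j

/-- `H(x) = 1 - x + x log x` (with `H(0) = 1`, since `log 0 = 0` in Lean). -/
def H (x : ℝ) : ℝ := 1 - x + x * Real.log x

/-- The inverse of the restriction of `H` to `[1, ∞)`. -/
def Hplusinv (y : ℝ) : ℝ := sInf {x : ℝ | 1 ≤ x ∧ y ≤ H x}

/-- The inverse of the restriction of `H` to `[0, 1]`. -/
def Hminusinv (y : ℝ) : ℝ := sInf {x : ℝ | 0 ≤ x ∧ H x ≤ y}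

/-- The standard normal distribution function. -/
def stdNormalCDF (x : ℝ) : ℝ :=
  ∫ t in Set.Iic x, Real.exp (-t ^ 2 / 2) / Real.sqrt (2 * Real.pi)

/-- The half-open unit cube centred at `a`. -/
def cubeAt {d : ℕ} (a : EuclideanSpace ℝ (Fin d)) : Set (EuclideanSpace ℝ (Fin d)) :=
  {x | ∀ i, x i - a i ∈ Set.Ioc (-(1/2) : ℝ) (1/2)}

lemma cubeAt_zero : cubeAt (0 : EuclideanSpace ℝ (Fin d)) = cube d := by
  simp [cubeAt, cube]

/-- The inclusion of the integer lattice in Euclidean space. -/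
def latticeHom (d : ℕ) : (Fin d → ℤ) →+ EuclideanSpace ℝ (Fin d) where
  toFun z := (WithLp.equiv 2 (Fin d → ℝ)).symm (fun i => (z i : ℝ))
  map_zero' := by ext; simp
  map_add' x y := by ext; simp

lemma latticeHom_apply (z : Fin d → ℤ) (i : Fin d) : latticeHom d z i = z i := rfl

instance : Countable (latticeHom d).range :=
  (Set.countable_range (latticeHom d)).to_subtype

lemma measurableSet_cubeAt (a : EuclideanSpace ℝ (Fin d)) : MeasurableSet (cubeAt a) := by
  have h : cubeAt a = ⋂ i, (fun x : EuclideanSpace ℝ (Fin d) => x i - a i) ⁻¹'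
      Set.Ioc (-(1/2) : ℝ) (1/2) := by
    ext x; simp [cubeAt]
  rw [h]
  refine MeasurableSet.iInter fun i => ?_
  have hm : Measurable fun x : EuclideanSpace ℝ (Fin d) => x i - a i := by fun_prop
  exact hm measurableSet_Ioc

lemma isAddFundamentalDomain_cubeAt (a : EuclideanSpace ℝ (Fin d)) :
    IsAddFundamentalDomain (latticeHom d).range (cubeAt a) volume := by
  refine IsAddFundamentalDomain.mk' (measurableSet_cubeAt a).nullMeasurableSet fun x => ?_
  have h := fun i => existsUnique_add_zsmul_mem_Ioc (one_pos : (0:ℝ) < 1) (x i - a i) (-(1/2))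
  choose z hz huniq using h
  refine ⟨⟨latticeHom d z, z, rfl⟩, ?_, ?_⟩
  · intro i
    have := hz i
    simp only [zsmul_eq_mul, mul_one] at this
    rw [show (-(1/2) + 1 : ℝ) = 1/2 by norm_num] at this
    rw [AddSubgroup.vadd_def, vadd_eq_add, PiLp.add_apply, latticeHom_apply]
    convert this using 1
    ring
  · rintro ⟨_, w, rfl⟩ hw
    congr 2
    ext i
    refine huniq i (w i) ?_
    have := hw i
    rw [AddSubgroup.vadd_def, vadd_eq_add, PiLp.add_apply, latticeHom_apply] at this
    simp only [zsmul_eq_mul, mul_one]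
    rw [show (-(1/2) + 1 : ℝ) = 1/2 by norm_num]
    convert this using 1
    ring

lemma torusDist_eq (x y : EuclideanSpace ℝ (Fin d)) :
    torusDist x y = ⨅ z : Fin d → ℤ, ‖x - y - latticeHom d z‖ := rfl

lemma torusDist_nonneg (x y : EuclideanSpace ℝ (Fin d)) : 0 ≤ torusDist x y :=
  Real.iInf_nonneg fun _ => norm_nonneg _

lemma torusDist_le_norm (x y : EuclideanSpace ℝ (Fin d)) : torusDist x y ≤ ‖x - y‖ := by
  rw [torusDist_eq]
  refine (ciInf_le ⟨0, ?_⟩ 0).trans (by simp)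
  rintro _ ⟨z, rfl⟩
  exact norm_nonneg _

lemma torusDist_vadd (x y : EuclideanSpace ℝ (Fin d)) (w : (latticeHom d).range) :
    torusDist x (w +ᵥ y) = torusDist x y := by
  obtain ⟨_, w, rfl⟩ := w
  rw [torusDist_eq, torusDist_eq, AddSubgroup.vadd_def, vadd_eq_add]
  refine (Equiv.addRight w).iInf_congr fun z => ?_
  simp only [Equiv.coe_addRight, map_add]
  congr 1
  abel

lemma measurable_torusDist :
    Measurable fun p : EuclideanSpace ℝ (Fin d) × EuclideanSpace ℝ (Fin d) =>
      torusDist p.1 p.2 := by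
  simp only [torusDist_eq]
  exact Measurable.iInf fun z => by fun_prop

/-- The probability that points at `x` and `y` are joined in the model with parameter `r`. -/
def edgeProb (M : Model d P) (r : ℝ) (x y : EuclideanSpace ℝ (Fin d)) : ℝ :=
  M.g (torusDist x y / r)

lemma edgeProb_mem (M : Model d P) {r : ℝ} (hr : 0 < r) (x y : EuclideanSpace ℝ (Fin d)) :
    edgeProb M r x y ∈ Set.Icc (0 : ℝ) 1 :=
  M.g_mem _ (div_nonneg (torusDist_nonneg x y) hr.le)

lemma measurable_edgeProb (M : Model d P) {r : ℝ} (hr : 0 < r) {β : Type*} [MeasurableSpace β]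
    {u v : β → EuclideanSpace ℝ (Fin d)} (hu : Measurable u) (hv : Measurable v) :
    Measurable fun w => edgeProb M r (u w) (v w) := by
  have hanti : Antitone fun t : ℝ => M.g (max t 0) := fun s t hst =>
    M.g_antitone (mem_Ici.2 (le_max_right _ _)) (mem_Ici.2 (le_max_right _ _))
      (max_le_max_right 0 hst)
  have hdist : Measurable fun w => torusDist (u w) (v w) / r :=
    (measurable_torusDist.comp (hu.prodMk hv)).div_const r
  convert hanti.measurable.comp hdist using 2 with w
  simp [edgeProb, max_eq_left (div_nonneg (torusDist_nonneg (u w) (v w)) hr.le)]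

lemma integrableOn_edgeProb (M : Model d P) {r : ℝ} (hr : 0 < r)
    (x : EuclideanSpace ℝ (Fin d)) {s : Set (EuclideanSpace ℝ (Fin d))} (hs : volume s ≠ ⊤) :
    IntegrableOn (edgeProb M r x) s := by
  refine Measure.integrableOn_of_bounded (M := 1) hs ?_ (ae_of_all _ fun y => ?_)
  · exact (measurable_edgeProb M hr measurable_const measurable_id).aestronglyMeasurable
  · have := edgeProb_mem M hr x y
    rw [Real.norm_eq_abs, abs_of_nonneg this.1]
    exact this.2

lemma volume_cube [IsProbabilityMeasure P] (M : Model d P) : volume (cube d) = 1 := by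
  have h := congrArg (fun μ => μ univ) (M.X_unif 1 le_rfl)
  simp only [Measure.restrict_apply_univ] at h
  rw [← h, Measure.map_apply (M.X_meas 1) MeasurableSet.univ]
  simp

lemma exists_integral_ball_ge (M : Model d P) {ρ : ℝ} (hρ : ρ < 1) :
    ∃ R > 0, ρ * M.α ≤ ∫ u in Metric.ball (0 : EuclideanSpace ℝ (Fin d)) R, M.g ‖u‖ := by
  have hcov : AECover (volume : Measure (EuclideanSpace ℝ (Fin d))) atTop
      (fun n : ℕ => Metric.ball (0 : EuclideanSpace ℝ (Fin d)) n) :=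
    aecover_ball tendsto_natCast_atTop_atTop
  have ht := hcov.integral_tendsto_of_countably_generated M.g_integrable
  rw [← M.α_def] at ht
  have hlt : ρ * M.α < M.α := by nlinarith [M.α_pos]
  obtain ⟨n, hn, hn0⟩ := ((ht.eventually_const_le hlt).and (eventually_gt_atTop 0)).exists
  exact ⟨n, by exact_mod_cast hn0, hn⟩

/-- Uniform lower bound for the probability that a fixed point is joined to a uniform one. -/
lemma exists_edgeProb_integral_ge [IsProbabilityMeasure P] (M : Model d P) {ρ : ℝ} (hρ : ρ < 1) :
    ∃ r₀ > 0, ∀ r, 0 < r → r ≤ r₀ → ∀ x,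
      ρ * M.α * r ^ d ≤ ∫ y in cube d, edgeProb M r x y := by
  obtain ⟨R, hR, hint⟩ := exists_integral_ball_ge M hρ
  refine ⟨1 / (2 * R), by positivity, fun r hr hrR x => ?_⟩
  set F : EuclideanSpace ℝ (Fin d) → ℝ :=
    (Metric.ball (0 : EuclideanSpace ℝ (Fin d)) R).indicator fun u => M.g ‖u‖ with hF
  have hFint : Integrable F := M.g_integrable.indicator measurableSet_ball
  have hFdef : ∫ u, F u = ∫ u in Metric.ball (0 : EuclideanSpace ℝ (Fin d)) R, M.g ‖u‖ :=
    integral_indicator measurableSet_ball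
  have hscale : ∫ y, F (r⁻¹ • (y - x)) = r ^ d * ∫ u, F u := by
    rw [integral_sub_right_eq_self (fun y => F (r⁻¹ • y)) x,
      Measure.integral_comp_inv_smul_of_nonneg volume F hr.le]
    simp
  have hvol : volume (cubeAt x) ≠ ⊤ := by
    rw [(isAddFundamentalDomain_cubeAt x).measure_eq (isAddFundamentalDomain_cubeAt 0),
      cubeAt_zero, volume_cube M]
    simp
  have hGint : Integrable fun y => F (r⁻¹ • (y - x)) :=
    (hFint.comp_smul (inv_ne_zero hr.ne')).comp_sub_right x
  have hsupp : ∀ y, y ∉ cubeAt x → F (r⁻¹ • (y - x)) = 0 := by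
    intro y hy
    refine indicator_of_notMem (fun hmem => hy fun i => ?_) _
    rw [mem_ball_zero_iff, norm_smul, Real.norm_eq_abs, abs_of_pos (inv_pos.2 hr)] at hmem
    have h1 : ‖y - x‖ < r * R := by
      rwa [inv_mul_lt_iff₀ hr] at hmem
    have h2 : r * R ≤ 1 / 2 := by
      calc r * R ≤ 1 / (2 * R) * R := by gcongr
        _ = 1 / 2 := by field_simp
    have h3 : |(y - x) i| ≤ ‖y - x‖ := by
      simpa using PiLp.norm_apply_le (y - x) i
    have h4 := abs_lt.1 (h3.trans_lt (h1.trans_le h2))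
    exact ⟨h4.1, h4.2.le⟩
  calc ρ * M.α * r ^ d ≤ r ^ d * ∫ u, F u := by
        rw [hFdef, mul_comm]
        gcongr
    _ = ∫ y in cubeAt x, F (r⁻¹ • (y - x)) := by
        rw [← hscale, setIntegral_eq_integral_of_forall_compl_eq_zero hsupp]
    _ ≤ ∫ y in cubeAt x, edgeProb M r x y := by
        refine setIntegral_mono hGint.integrableOn (integrableOn_edgeProb M hr x hvol)
          fun y => ?_
        refine (indicator_le_self' (fun _ _ => (M.g_mem _ (norm_nonneg _)).1) _).trans ?_
        refine M.g_antitone (div_nonneg (torusDist_nonneg x y) hr.le) (norm_nonneg _) ?_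
        rw [norm_smul, Real.norm_eq_abs, abs_of_pos (inv_pos.2 hr), norm_sub_rev,
          div_eq_inv_mul]
        gcongr
        exact torusDist_le_norm x y
    _ = ∫ y in cube d, edgeProb M r x y := by
        rw [← cubeAt_zero]
        refine (isAddFundamentalDomain_cubeAt x).setIntegral_eq
          (isAddFundamentalDomain_cubeAt 0) fun w y => ?_
        simp [edgeProb, torusDist_vadd]

lemma lintegral_comp_prodMk_of_indepFun {α β : Type*} [MeasurableSpace α] [MeasurableSpace β]
    [IsFiniteMeasure P] {A : Ω → α} {B : Ω → β} (hA : Measurable A) (hB : Measurable B)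
    (hAB : IndepFun A B P) {f : α × β → ENNReal} (hf : Measurable f) :
    ∫⁻ ω, f (A ω, B ω) ∂P = ∫⁻ ω, ∫⁻ ω', f (A ω, B ω') ∂P ∂P := by
  have hmap := (indepFun_iff_map_prod_eq_prod_map_map hA.aemeasurable hB.aemeasurable).1 hAB
  rw [← lintegral_map hf (hA.prodMk hB), hmap, lintegral_prod _ hf.aemeasurable,
    lintegral_map hf.lintegral_prod_right' hA]
  refine lintegral_congr fun ω => ?_
  exact lintegral_map (hf.comp measurable_prodMk_left) hB

lemma measure_lt_U (M : Model d P) {i j : ℕ} (hi : 1 ≤ i) (hij : i < j) {t : ℝ}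
    (ht : t ∈ Set.Icc (0 : ℝ) 1) : P (M.U i j ⁻¹' Set.Ioi t) = ENNReal.ofReal (1 - t) := by
  rw [← Measure.map_apply (M.U_meas i j) measurableSet_Ioi, M.U_unif i j hi hij,
    Measure.restrict_apply measurableSet_Ioi]
  have : Set.Ioi t ∩ Set.Icc (0 : ℝ) 1 = Set.Ioc t 1 := by
    ext x
    simp only [mem_inter_iff, mem_Ioi, mem_Icc, mem_Ioc]
    constructor
    · rintro ⟨h1, h2, h3⟩; exact ⟨h1, h3⟩
    · rintro ⟨h1, h2⟩; exact ⟨h1, by linarith [ht.1], h2⟩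
  rw [this, Real.volume_Ioc]

lemma indepFun_X_U (M : Model d P) :
    IndepFun (fun ω (i : ℕ) => M.X i ω) (fun ω (p : ℕ × ℕ) => M.U p.1 p.2 ω) P := by
  have h := M.families_indep.indep (show (0 : Fin 3) ≠ 2 by decide)
  exact h

/-- The index of the edge variable attached to an unordered pair of distinct labels. -/
def edgeIndex (i j : {i : ℕ // 1 ≤ i}) (h : j ≠ i) : {p : ℕ × ℕ // 1 ≤ p.1 ∧ p.1 < p.2} :=
  ⟨(min i.1 j.1, max i.1 j.1), le_min i.2 j.2,
    min_lt_max.2 fun hij => h (Subtype.ext hij.symm)⟩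

lemma edgeIndex_injective {i : {i : ℕ // 1 ≤ i}} {T : Finset {i : ℕ // 1 ≤ i}} (hT : i ∉ T) :
    Function.Injective fun t : T => edgeIndex i t (ne_of_mem_of_not_mem t.2 hT) := by
  intro s t hst
  simp only [edgeIndex, Subtype.mk.injEq, Prod.mk.injEq] at hst
  have h1 := hst.1
  have h2 := hst.2
  apply Subtype.ext
  apply Subtype.ext
  omega

/-- Conditionally on the positions, the edge variables at a fixed label are independent. -/
lemma measure_forall_lt_U (M : Model d P) {i : {i : ℕ // 1 ≤ i}} {T : Finset {i : ℕ // 1 ≤ i}}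
    (hT : i ∉ T) {a : T → ℝ} (ha : ∀ t, a t ∈ Set.Icc (0 : ℝ) 1) :
    P {ω | ∀ t : T, a t < M.U (min i.1 t.1.1) (max i.1 t.1.1) ω} =
      ∏ t : T, ENNReal.ofReal (1 - a t) := by
  have h := (M.U_indep.precomp (edgeIndex_injective hT)).measure_inter_preimage_eq_mul
    Finset.univ (sets := fun t => Set.Ioi (a t)) (fun t _ => measurableSet_Ioi)
  have hset : {ω | ∀ t : T, a t < M.U (min i.1 t.1.1) (max i.1 t.1.1) ω} =
      ⋂ t ∈ (Finset.univ : Finset T), M.U (min i.1 t.1.1) (max i.1 t.1.1) ⁻¹' Set.Ioi (a t) := by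
    ext ω
    simp
  rw [hset]
  refine h.trans (Finset.prod_congr rfl fun t _ => ?_)
  have he := (edgeIndex i t (ne_of_mem_of_not_mem t.2 hT)).2
  exact measure_lt_U M he.1 he.2 (ha t)

lemma lintegral_one_sub_le [IsProbabilityMeasure P] (M : Model d P)
    {r : ℝ} (hr : 0 < r) {p : ℝ} {x : EuclideanSpace ℝ (Fin d)}
    (hp : p ≤ ∫ y in cube d, edgeProb M r x y) {j : ℕ} (hj : 1 ≤ j) :
    ∫⁻ ω, ENNReal.ofReal (1 - edgeProb M r x (M.X j ω)) ∂P ≤ ENNReal.ofReal (1 - p) := by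
  have hm : Measurable (edgeProb M r x) :=
    measurable_edgeProb M hr measurable_const measurable_id
  have hint := integrableOn_edgeProb M hr x (s := cube d) (by simp [volume_cube M])
  have : IsFiniteMeasure (volume.restrict (cube d)) := ⟨by simp [volume_cube M]⟩
  rw [← lintegral_map (f := fun y => ENNReal.ofReal (1 - edgeProb M r x y)) (by fun_prop)
      (M.X_meas j), M.X_unif j hj, ← ofReal_integral_eq_lintegral_ofReal
      (f := fun y => 1 - edgeProb M r x y) ((integrable_const 1).sub hint)
      (ae_of_all _ fun y => sub_nonneg.2 (edgeProb_mem M hr x y).2),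
    integral_sub (integrable_const 1) hint]
  apply ENNReal.ofReal_le_ofReal
  have : (volume.restrict (cube d)).real univ = 1 := by
    simp [Measure.real, volume_cube M]
  simp only [integral_const, this, smul_eq_mul, mul_one]
  linarith

/-- The probability that the label `i` is joined to none of the labels in `T`. -/
lemma measure_no_edge_le [IsProbabilityMeasure P] (M : Model d P)
    {i : {i : ℕ // 1 ≤ i}} {T : Finset {i : ℕ // 1 ≤ i}} (hT : i ∉ T)
    {r : ℝ} (hr : 0 < r) {p : ℝ} (hp : ∀ x, p ≤ ∫ y in cube d, edgeProb M r x y) :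
    P {ω | ∀ t : T, edgeProb M r (M.X i ω) (M.X t ω) <
        M.U (min i.1 t.1.1) (max i.1 t.1.1) ω} ≤ ENNReal.ofReal (1 - p) ^ T.card := by
  have hXm : Measurable fun ω (i : ℕ) => M.X i ω := measurable_pi_lambda _ M.X_meas
  have hUm : Measurable fun ω (p : ℕ × ℕ) => M.U p.1 p.2 ω :=
    measurable_pi_lambda _ fun p => M.U_meas p.1 p.2
  set S : Set ((ℕ → EuclideanSpace ℝ (Fin d)) × (ℕ × ℕ → ℝ)) :=
    {w | ∀ t : T, edgeProb M r (w.1 i) (w.1 t) < w.2 (min i.1 t.1.1, max i.1 t.1.1)} with hS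
  have hSm : MeasurableSet S := by
    have : S = ⋂ t : T, {w | edgeProb M r (w.1 i) (w.1 t) <
        w.2 (min i.1 t.1.1, max i.1 t.1.1)} := by
      ext w; simp [hS]
    rw [this]
    refine MeasurableSet.iInter fun t => measurableSet_lt ?_ ?_
    · exact measurable_edgeProb M hr ((measurable_pi_apply _).comp measurable_fst)
        ((measurable_pi_apply _).comp measurable_fst)
    · exact (measurable_pi_apply _).comp measurable_snd
  have hE : {ω | ∀ t : T, edgeProb M r (M.X i ω) (M.X t ω) <
        M.U (min i.1 t.1.1) (max i.1 t.1.1) ω} =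
      (fun ω => ((fun i : ℕ => M.X i ω), (fun p : ℕ × ℕ => M.U p.1 p.2 ω))) ⁻¹' S := rfl
  have hfirst : P {ω | ∀ t : T, edgeProb M r (M.X i ω) (M.X t ω) <
        M.U (min i.1 t.1.1) (max i.1 t.1.1) ω} =
      ∫⁻ ω, ∏ t : T, ENNReal.ofReal (1 - edgeProb M r (M.X i ω) (M.X t ω)) ∂P := by
    rw [hE, ← lintegral_indicator_one (hXm.prodMk hUm hSm)]
    have h := lintegral_comp_prodMk_of_indepFun hXm hUm (indepFun_X_U M)
      (f := S.indicator 1) (measurable_one.indicator hSm)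
    refine h.trans (lintegral_congr fun ω => ?_)
    have hsec := measure_forall_lt_U M hT (a := fun t => edgeProb M r (M.X i ω) (M.X t ω))
      fun t => edgeProb_mem M hr _ _
    rw [← hsec, ← lintegral_indicator_one]
    · rfl
    · exact (measurable_prodMk_left.comp hUm :
        Measurable fun ω' => ((fun i : ℕ => M.X i ω), (fun p : ℕ × ℕ => M.U p.1 p.2 ω'))) hSm
  have hind : IndepFun (M.X i) (fun ω (t : T) => M.X t ω) P :=
    (M.X_indep.indepFun_finset {i} T (by simpa using hT) (fun j => M.X_meas j)).comp
      (measurable_pi_apply (⟨i, by simp⟩ : ({i} : Finset {i : ℕ // 1 ≤ i}))) measurable_id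
  have hTm : Measurable fun ω (t : T) => M.X t ω := measurable_pi_lambda _ fun t => M.X_meas t
  rw [hfirst]
  have hsecond := lintegral_comp_prodMk_of_indepFun (M.X_meas i) hTm hind
    (f := fun w => ∏ t : T, ENNReal.ofReal (1 - edgeProb M r w.1 (w.2 t)))
    (Finset.measurable_prod _ fun t _ => ENNReal.measurable_ofReal.comp
      (measurable_const.sub (measurable_edgeProb M hr measurable_fst
        ((measurable_pi_apply t).comp measurable_snd))))
  refine hsecond.le.trans ?_
  have hbound : ∀ x, ∫⁻ ω', ∏ t : T, ENNReal.ofReal (1 - edgeProb M r x (M.X t ω')) ∂P ≤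
      ENNReal.ofReal (1 - p) ^ T.card := by
    intro x
    have hm : Measurable fun y => ENNReal.ofReal (1 - edgeProb M r x y) :=
      ENNReal.measurable_ofReal.comp
        (measurable_const.sub (measurable_edgeProb M hr measurable_const measurable_id))
    have hXT : iIndepFun (fun t : T => M.X t) P :=
      M.X_indep.precomp (Subtype.val_injective (p := fun t => t ∈ T))
    rw [lintegral_prod_eq_prod_lintegral_of_indepFun Finset.univ
      (fun (t : T) ω' => ENNReal.ofReal (1 - edgeProb M r x (M.X t ω')))
      (hXT.comp (fun _ y => ENNReal.ofReal (1 - edgeProb M r x y)) fun _ => hm)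
      (fun t => hm.comp (M.X_meas t))]
    refine (Finset.prod_le_prod' fun t _ => lintegral_one_sub_le M hr (hp x) t.1.2).trans ?_
    simp
  refine (lintegral_mono fun ω => hbound (M.X i ω)).trans ?_
  simp

/-- The probability that some label up to `L` is joined to no other label up to `m`. -/
lemma measure_exists_no_edge_le [IsProbabilityMeasure P] (M : Model d P)
    {r : ℝ} (hr : 0 < r) {p : ℝ} (hp0 : 0 ≤ p)
    (hp : ∀ x, p ≤ ∫ y in cube d, edgeProb M r x y) (L m : ℕ) :
    P {ω | ∃ i, 1 ≤ i ∧ i ≤ L ∧ ∀ j, 1 ≤ j → j ≤ m → j ≠ i →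
        edgeProb M r (M.X i ω) (M.X j ω) < M.U (min i j) (max i j) ω} ≤
      ENNReal.ofReal (L * Real.exp (-(p * (m - 1)))) := by
  classical
  have hone : ∀ i ∈ Finset.Icc 1 L, P {ω | ∀ j, 1 ≤ j → j ≤ m → j ≠ i →
        edgeProb M r (M.X i ω) (M.X j ω) < M.U (min i j) (max i j) ω} ≤
      ENNReal.ofReal (Real.exp (-(p * (m - 1)))) := by
    intro i hi
    set i' : {i : ℕ // 1 ≤ i} := ⟨i, (Finset.mem_Icc.1 hi).1⟩
    set T : Finset {i : ℕ // 1 ≤ i} := ((Finset.Icc 1 m).subtype (1 ≤ ·)).erase i' with hTdef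
    have hcard : (m : ℝ) - 1 ≤ T.card := by
      have h1 := Finset.pred_card_le_card_erase (s := (Finset.Icc 1 m).subtype (1 ≤ ·)) (a := i')
      have h2 : ((Finset.Icc 1 m).subtype (1 ≤ ·)).card = m := by
        rw [Finset.card_subtype, Finset.filter_true_of_mem fun j hj => (Finset.mem_Icc.1 hj).1]
        simp
      rw [h2, ← hTdef] at h1
      have h3 : m ≤ T.card + 1 := by omega
      have : (m : ℝ) ≤ T.card + 1 := by exact_mod_cast h3
      linarith
    calc _ ≤ P {ω | ∀ t : T, edgeProb M r (M.X i' ω) (M.X t ω) <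
          M.U (min i'.1 t.1.1) (max i'.1 t.1.1) ω} := by
          refine measure_mono fun ω hω t => ?_
          have ht := t.2
          simp only [hTdef, Finset.mem_erase, Finset.mem_subtype, Finset.mem_Icc] at ht
          exact hω t ht.2.1 ht.2.2 fun h => ht.1 (Subtype.ext h)
      _ ≤ ENNReal.ofReal (1 - p) ^ T.card :=
          measure_no_edge_le M (Finset.notMem_erase _ _) hr hp
      _ ≤ ENNReal.ofReal (Real.exp (-p)) ^ T.card := by
          gcongr
          linarith [Real.add_one_le_exp (-p)]
      _ = ENNReal.ofReal (Real.exp (-(p * T.card))) := by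
          rw [← ENNReal.ofReal_pow (Real.exp_pos _).le, ← Real.exp_nat_mul]
          ring_nf
      _ ≤ _ := by gcongr
  calc _ ≤ P (⋃ i ∈ Finset.Icc 1 L, {ω | ∀ j, 1 ≤ j → j ≤ m → j ≠ i →
        edgeProb M r (M.X i ω) (M.X j ω) < M.U (min i j) (max i j) ω}) := by
        refine measure_mono ?_
        rintro ω ⟨i, h1, h2, h3⟩
        exact mem_iUnion₂.2 ⟨i, Finset.mem_Icc.2 ⟨h1, h2⟩, h3⟩
    _ ≤ ∑ i ∈ Finset.Icc 1 L, P {ω | ∀ j, 1 ≤ j → j ≤ m → j ≠ i →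
        edgeProb M r (M.X i ω) (M.X j ω) < M.U (min i j) (max i j) ω} :=
        measure_biUnion_finset_le _ _
    _ ≤ ∑ i ∈ Finset.Icc 1 L, ENNReal.ofReal (Real.exp (-(p * (m - 1)))) :=
        Finset.sum_le_sum hone
    _ = _ := by
        rw [Finset.sum_const, Nat.card_Icc, Nat.add_sub_cancel, nsmul_eq_mul,
          ENNReal.ofReal_mul (Nat.cast_nonneg L), ENNReal.ofReal_natCast]

/-- The probability generating function of the Poisson counts. -/
lemma lintegral_pow_N (M : Model d P) (n : ℕ) {s : ℝ} (hs : 0 ≤ s) :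
    ∫⁻ ω, ENNReal.ofReal (s ^ M.N n ω) ∂P = ENNReal.ofReal (Real.exp (n * (s - 1))) := by
  have hterm : ∀ k : ℕ, ENNReal.ofReal (s ^ k) * P.map (M.N n) {k} =
      ENNReal.ofReal (Real.exp (-(n : ℝ)) * ((n * s) ^ k / k.factorial)) := by
    intro k
    have hk : P.map (M.N n) {k} =
        ENNReal.ofReal (Real.exp (-(n : ℝ)) * (n : ℝ) ^ k / k.factorial) := by
      rw [Measure.map_apply (M.N_meas n) (measurableSet_singleton k), ← M.N_poisson n k]
      rfl
    rw [hk, ← ENNReal.ofReal_mul (by positivity)]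
    congr 1
    rw [mul_pow]
    ring
  have hsum : HasSum (fun k : ℕ => Real.exp (-(n : ℝ)) * ((n * s) ^ k / k.factorial))
      (Real.exp (n * (s - 1))) := by
    have h := (NormedSpace.expSeries_div_hasSum_exp ((n : ℝ) * s)).mul_left (Real.exp (-(n : ℝ)))
    rw [← Real.exp_eq_exp_ℝ, ← Real.exp_add] at h
    rwa [show (n : ℝ) * (s - 1) = -n + n * s by ring]
  rw [← lintegral_map (f := fun k : ℕ => ENNReal.ofReal (s ^ k)) (measurable_of_countable _)
    (M.N_meas n), lintegral_countable']
  simp_rw [hterm]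
  rw [← ENNReal.ofReal_tsum_of_nonneg (fun k => by positivity) hsum.summable, hsum.tsum_eq]

/-- Chernoff bound for the Poisson counts. -/
lemma measure_N_le (M : Model d P) (n : ℕ) {s b : ℝ} (hs : 0 ≤ s) {B : Set ℕ}
    (hB : ∀ k ∈ B, Real.exp b ≤ s ^ k) :
    P {ω | M.N n ω ∈ B} ≤ ENNReal.ofReal (Real.exp (n * (s - 1) - b)) := by
  have hmarkov := meas_ge_le_lintegral_div (μ := P)
    (f := fun ω => ENNReal.ofReal (s ^ M.N n ω))
    ((measurable_of_countable fun k : ℕ => ENNReal.ofReal (s ^ k)).comp (M.N_meas n)).aemeasurable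
    (ε := ENNReal.ofReal (Real.exp b)) (by simp [Real.exp_pos]) ENNReal.ofReal_ne_top
  rw [lintegral_pow_N M n hs, ← ENNReal.ofReal_div_of_pos (Real.exp_pos b), ← Real.exp_sub]
    at hmarkov
  refine le_trans (measure_mono fun ω hω => ?_) hmarkov
  exact ENNReal.ofReal_le_ofReal (hB _ hω)

lemma H_pos {x : ℝ} (hx : 0 < x) (hx1 : x ≠ 1) : 0 < H x := by
  have h := Real.log_lt_sub_one_of_pos (inv_pos.2 hx) (by simpa using hx1)
  rw [Real.log_inv] at h
  have h2 : x * -Real.log x < x * (x⁻¹ - 1) := by gcongr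
  rw [mul_sub, mul_inv_cancel₀ hx.ne'] at h2
  unfold H
  linarith

lemma measure_N_lt_le (M : Model d P) (n : ℕ) {ρ : ℝ} (h0 : 0 < ρ) (h1 : ρ < 1) :
    P {ω | (M.N n ω : ℝ) < ρ * n} ≤ ENNReal.ofReal (Real.exp (-(H ρ * n))) := by
  have h := measure_N_le M n h0.le (B := {k : ℕ | (k : ℝ) < ρ * n})
    (b := Real.log ρ * (ρ * n)) fun k hk => by
      rw [← Real.rpow_natCast, Real.rpow_def_of_pos h0]
      exact Real.exp_le_exp.2 (mul_le_mul_of_nonpos_left (le_of_lt hk)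
        (Real.log_nonpos h0.le h1.le))
  refine h.trans (le_of_eq ?_)
  congr 2
  unfold H
  ring

lemma measure_lt_N_le (M : Model d P) (n : ℕ) :
    P {ω | 4 * n < M.N n ω} ≤ ENNReal.ofReal (Real.exp (-(1 * n))) := by
  have h := measure_N_le M n zero_le_two (B := {k : ℕ | 4 * n < k})
    (b := Real.log 2 * (4 * n)) fun k (hk : 4 * n < k) => by
      rw [← Real.rpow_natCast, Real.rpow_def_of_pos two_pos]
      have : (4 * n : ℝ) ≤ k := by exact_mod_cast hk.le
      exact Real.exp_le_exp.2 (mul_le_mul_of_nonneg_left this (Real.log_nonneg one_le_two))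
  refine h.trans ?_
  gcongr
  nlinarith [Real.log_two_gt_d9, (Nat.cast_nonneg n : (0 : ℝ) ≤ n)]

lemma ae_eventually_notMem_of_le [IsFiniteMeasure P] {s : ℕ → Set Ω} {b : ℕ → ℝ}
    (hb : Summable b) (h : ∀ᶠ k in atTop, P (s k) ≤ ENNReal.ofReal (b k)) :
    ∀ᵐ ω ∂P, ∀ᶠ k in atTop, ω ∉ s k := by
  obtain ⟨K, hK⟩ := eventually_atTop.1 h
  have hsum : ∑' k, P (s (k + K)) ≠ ⊤ := by
    refine ne_top_of_le_ne_top ?_ (ENNReal.tsum_le_tsum fun k => hK (k + K) (by omega))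
    exact ((summable_nat_add_iff K).2 hb).tsum_ofReal_ne_top
  filter_upwards [ae_eventually_notMem hsum] with ω hω
  rw [← map_add_atTop_eq_nat K]
  exact hω

lemma summable_exp_neg_mul_pow {b : ℝ} (hb : 0 < b) {a : ℕ} (ha : 1 ≤ a) :
    Summable fun k : ℕ => Real.exp (-(b * ((k ^ a : ℕ) : ℝ))) := by
  refine Summable.of_nonneg_of_le (fun k => (Real.exp_pos _).le) (fun k => ?_)
    (Real.summable_exp_nat_mul_iff.2 (neg_lt_zero.2 hb))
  refine Real.exp_le_exp.2 ?_
  have : (k : ℝ) ≤ ((k ^ a : ℕ) : ℝ) := by exact_mod_cast Nat.le_self_pow (by omega) k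
  nlinarith

lemma critRadius_nonneg (M : Model d P) (n : ℕ) (ω : Ω) : 0 ≤ critRadius M n ω :=
  Real.sInf_nonneg fun _ hr => hr.1.le

lemma critRadius_le (M : Model d P) {n m L : ℕ} {r : ℝ} {ω : Ω} (hr : 0 < r)
    (hm : m ≤ M.N n ω) (hL : M.N n ω ≤ L)
    (h : ¬ ∃ i, 1 ≤ i ∧ i ≤ L ∧ ∀ j, 1 ≤ j → j ≤ m → j ≠ i →
        edgeProb M r (M.X i ω) (M.X j ω) < M.U (min i j) (max i j) ω) :
    critRadius M n ω ≤ r := by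
  refine csInf_le ⟨0, fun _ hs => hs.1.le⟩ ⟨hr, ?_⟩
  have hempty : {i : ℕ | 1 ≤ i ∧ i ≤ M.N n ω ∧ deg M n r ω i = 0} = ∅ := by
    rw [eq_empty_iff_forall_notMem]
    rintro i ⟨hi1, hiN, hdeg⟩
    have hfin : {j : ℕ | adj M n r ω i j}.Finite :=
      (Set.finite_Iic (M.N n ω)).subset fun j hj => hj.2.2.2.2.1
    have hnone := (Set.ncard_eq_zero hfin).1 hdeg
    refine h ⟨i, hi1, hiN.trans hL, fun j hj1 hjm hji => ?_⟩
    by_contra hle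
    have : j ∈ {j : ℕ | adj M n r ω i j} :=
      ⟨hji.symm, hi1, hj1, hiN, hjm.trans hm, not_lt.1 hle⟩
    rw [hnone] at this
    exact this
  rw [isolatedCount, hempty, Set.ncard_empty]

lemma rhat_pow (M : Model d P) (hd : d ≠ 0) {γ : ℝ} (hγ : 0 ≤ γ) (n : ℕ) :
    rhat M γ n ^ d = γ * Real.log n / (M.α * n) := by
  have := M.α_pos
  rw [rhat, one_div, Real.rpow_inv_natCast_pow _ hd]
  have := Real.log_natCast_nonneg n
  positivity

lemma rhat_pos (M : Model d P) {γ : ℝ} (hγ : 0 < γ) {n : ℕ} (hn : 2 ≤ n) : 0 < rhat M γ n := by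
  have := M.α_pos
  have h : (1 : ℝ) < n := by exact_mod_cast hn
  have := Real.log_pos h
  unfold rhat
  positivity

lemma tendsto_rhat_pow (M : Model d P) (hd : d ≠ 0) {γ : ℝ} (hγ : 0 ≤ γ) :
    Tendsto (fun n => rhat M γ n ^ d) atTop (nhds 0) := by
  have h := (Real.isLittleO_log_id_atTop.tendsto_div_nhds_zero.comp
    tendsto_natCast_atTop_atTop).const_mul (γ / M.α)
  rw [mul_zero] at h
  refine h.congr fun n => ?_
  rw [rhat_pow M hd hγ]
  simp only [Function.comp, id]
  rw [div_mul_div_comm]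

lemma exists_pow_le_lt {a : ℕ} (ha : a ≠ 0) {K n : ℕ} (hn : K ^ a ≤ n) :
    ∃ k, K ≤ k ∧ k ^ a ≤ n ∧ n < (k + 1) ^ a := by
  refine ⟨Nat.findGreatest (fun k => k ^ a ≤ n) n, ?_, ?_, ?_⟩
  · exact Nat.le_findGreatest ((Nat.le_self_pow ha K).trans hn) hn
  · exact Nat.findGreatest_spec (P := fun k => k ^ a ≤ n)
      ((Nat.le_self_pow ha K).trans hn) hn
  · by_contra! hle
    have := Nat.le_findGreatest (P := fun k => k ^ a ≤ n) ((Nat.le_self_pow ha _).trans hle) hle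
    omega

lemma eventually_sq_mul_succ_pow_le {ρ : ℝ} (h0 : 0 < ρ) (h1 : ρ < 1) {a : ℕ} (ha : a ≠ 0) :
    ∀ᶠ k : ℕ in atTop, ρ ^ 2 * (((k + 1) ^ a : ℕ) : ℝ) ≤ ρ * ((k ^ a : ℕ) : ℝ) - 1 := by
  have hratio : Tendsto (fun k : ℕ => ρ * ((k : ℝ) / (k + 1)) ^ a - (1 / ((k : ℝ) + 1)) ^ a)
      atTop (nhds (ρ * 1 ^ a - 0 ^ a)) :=
    (((tendsto_natCast_div_add_atTop (1 : ℝ)).pow a).const_mul ρ).sub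
      ((tendsto_one_div_add_atTop_nhds_zero_nat (𝕜 := ℝ)).pow a)
  rw [one_pow, mul_one, zero_pow ha, sub_zero] at hratio
  have hlt : ρ ^ 2 < ρ := by nlinarith
  filter_upwards [hratio.eventually_const_le hlt] with k hk
  have hpos : (0 : ℝ) < ((k : ℝ) + 1) ^ a := by positivity
  rw [div_pow, div_pow, one_pow, mul_div_assoc', ← sub_div, le_div_iff₀ hpos] at hk
  push_cast
  exact hk

lemma ae_eventually_critRadius_le [IsProbabilityMeasure P] (hd : d ≠ 0) (M : Model d P)
    {γ : ℝ} (hγ : 1 < γ) :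
    ∀ᵐ ω ∂P, ∀ᶠ n : ℕ in atTop, M.α * n * critRadius M n ω ^ d / Real.log n ≤ γ := by
  have hα := M.α_pos
  obtain ⟨ρ, h0, h1, hρ⟩ : ∃ ρ : ℝ, 0 < ρ ∧ ρ < 1 ∧ 1 < ρ ^ 3 * γ := by
    have ht : Tendsto (fun ρ : ℝ => ρ ^ 3 * γ) (nhdsWithin 1 (Iio 1)) (nhds (1 ^ 3 * γ)) :=
      ((continuous_pow 3).mul_const γ).continuousAt.tendsto.mono_left nhdsWithin_le_nhds
    rw [one_pow, one_mul] at ht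
    have hpos : ∀ᶠ ρ : ℝ in nhdsWithin 1 (Iio 1), 0 < ρ :=
      nhdsWithin_le_nhds (lt_mem_nhds one_pos)
    obtain ⟨ρ, ⟨ha, hb⟩, hc⟩ :=
      ((hpos.and (ht.eventually_const_lt hγ)).and self_mem_nhdsWithin).exists
    exact ⟨ρ, ha, hc, hb⟩
  set η := ρ ^ 3 * γ - 1 with hη
  have hη0 : 0 < η := by linarith
  obtain ⟨a, ha⟩ := exists_nat_gt (2 / η)
  have haη : 2 < a * η := by rwa [div_lt_iff₀ hη0] at ha
  have ha1 : a ≠ 0 := by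
    rintro rfl
    norm_num at haη
  obtain ⟨r₀, hr₀, hedge⟩ := exists_edgeProb_integral_ge M h1
  set v : ℕ → ℕ := fun k => (k + 1) ^ a with hv
  set m : ℕ → ℕ := fun k => ⌈ρ * ((k ^ a : ℕ) : ℝ)⌉₊
  have hvtop : Tendsto v atTop atTop :=
    (tendsto_pow_atTop ha1).comp (tendsto_add_atTop_nat 1)
  have hlower : ∀ᵐ ω ∂P, ∀ᶠ k in atTop, ω ∉ {ω | (M.N (k ^ a) ω : ℝ) < ρ * ((k ^ a : ℕ) : ℝ)} :=
    ae_eventually_notMem_of_le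
      (summable_exp_neg_mul_pow (H_pos h0 h1.ne) (Nat.one_le_iff_ne_zero.2 ha1))
      (Eventually.of_forall fun k => measure_N_lt_le M (k ^ a) h0 h1)
  have hupper : ∀ᵐ ω ∂P, ∀ᶠ k in atTop, ω ∉ {ω | 4 * v k < M.N (v k) ω} :=
    ae_eventually_notMem_of_le
      ((summable_nat_add_iff 1).2
        (summable_exp_neg_mul_pow one_pos (Nat.one_le_iff_ne_zero.2 ha1)))
      (Eventually.of_forall fun k => measure_lt_N_le M (v k))
  have hedges : ∀ᵐ ω ∂P, ∀ᶠ k in atTop,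
      ω ∉ {ω | ∃ i, 1 ≤ i ∧ i ≤ 4 * v k ∧ ∀ j, 1 ≤ j → j ≤ m k → j ≠ i →
        edgeProb M (rhat M γ (v k)) (M.X i ω) (M.X j ω) < M.U (min i j) (max i j) ω} := by
    have hsum : Summable fun k : ℕ => 4 * (1 / (((k + 1 : ℕ) : ℝ)) ^ 2) :=
      ((summable_nat_add_iff 1).2 (Real.summable_one_div_nat_pow.2 one_lt_two)).mul_left 4
    refine ae_eventually_notMem_of_le hsum ?_
    filter_upwards [eventually_sq_mul_succ_pow_le h0 h1 ha1, hvtop.eventually_ge_atTop 2,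
      ((tendsto_rhat_pow M hd (by linarith : (0 : ℝ) ≤ γ)).comp hvtop).eventually_le_const
        (pow_pos hr₀ d)] with k hk hv2 hsmall
    have hr := rhat_pos M (by linarith : 0 < γ) hv2
    have hrr₀ : rhat M γ (v k) ≤ r₀ := le_of_pow_le_pow_left₀ hd hr₀.le hsmall
    refine (measure_exists_no_edge_le M hr (by positivity) (hedge _ hr hrr₀) (4 * v k)
      (m k)).trans (ENNReal.ofReal_le_ofReal ?_)
    have hvpos : (0 : ℝ) < v k := by exact_mod_cast (by omega : 0 < v k)
    have hlog : 0 ≤ Real.log (v k) := Real.log_natCast_nonneg _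
    have hexp : (1 + η) * Real.log (v k) ≤
        ρ * M.α * rhat M γ (v k) ^ d * ((m k : ℝ) - 1) := by
      have hmk : ρ ^ 2 * (v k : ℝ) ≤ (m k : ℝ) - 1 :=
        hk.trans (sub_le_sub_right (Nat.le_ceil _) 1)
      calc (1 + η) * Real.log (v k)
          = ρ * M.α * rhat M γ (v k) ^ d * (ρ ^ 2 * (v k : ℝ)) := by
            rw [rhat_pow M hd (by linarith), hη]
            field_simp
            ring
        _ ≤ _ := by gcongr
    calc ((4 * v k : ℕ) : ℝ) *
          Real.exp (-(ρ * M.α * rhat M γ (v k) ^ d * ((m k : ℝ) - 1)))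
        ≤ ((4 * v k : ℕ) : ℝ) * Real.exp (-((1 + η) * Real.log (v k))) := by gcongr
      _ = 4 * Real.exp (-(η * Real.log (v k))) := by
          rw [show -((1 + η) * Real.log (v k)) =
            -Real.log (v k) + -(η * Real.log (v k)) by ring, Real.exp_add, Real.exp_neg,
            Real.exp_log hvpos]
          push_cast
          field_simp
      _ ≤ 4 * Real.exp (-(2 * Real.log ((k + 1 : ℕ) : ℝ))) := by
          have hlogv : Real.log (v k) = a * Real.log ((k + 1 : ℕ) : ℝ) := by
            rw [hv, Nat.cast_pow, Real.log_pow]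
          have := Real.log_natCast_nonneg (k + 1)
          rw [hlogv]
          refine mul_le_mul_of_nonneg_left (Real.exp_le_exp.2 ?_) (by norm_num)
          nlinarith
      _ = 4 * (1 / (((k + 1 : ℕ) : ℝ)) ^ 2) := by
          have hk1 : (0 : ℝ) < ((k + 1 : ℕ) : ℝ) := by positivity
          rw [Real.exp_neg, mul_comm 2, Real.exp_mul, Real.exp_log hk1, one_div]
          norm_num
  filter_upwards [hlower, hupper, hedges] with ω hl hu he
  obtain ⟨K, hK⟩ := eventually_atTop.1 ((hl.and (hu.and he)).and (hvtop.eventually_ge_atTop 2))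
  filter_upwards [eventually_ge_atTop (K ^ a), eventually_ge_atTop 3] with n hnK hn3
  obtain ⟨k, hKk, hkn, hnk⟩ := exists_pow_le_lt ha1 hnK
  obtain ⟨⟨hlk, huk, hek⟩, hv2⟩ := hK k hKk
  have hr := rhat_pos M (by linarith : 0 < γ) hv2
  have hcrit : critRadius M n ω ≤ rhat M γ (v k) := by
    refine critRadius_le M hr (m := m k) (L := 4 * v k) ?_ ?_ hek
    · exact (Nat.ceil_le.2 (not_lt.1 hlk)).trans (M.N_mono ω hkn)
    · exact (M.N_mono ω hnk.le).trans (not_lt.1 huk)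
  have hn3' : (3 : ℝ) ≤ n := by exact_mod_cast hn3
  have hnv : (n : ℝ) ≤ v k := by exact_mod_cast hnk.le
  have hlogn : 0 < Real.log n := Real.log_pos (by linarith)
  have hanti := Real.log_div_self_antitoneOn
    (mem_Ici.2 (by linarith [Real.exp_one_lt_d9] : Real.exp 1 ≤ n))
    (mem_Ici.2 (by linarith [Real.exp_one_lt_d9] : Real.exp 1 ≤ v k)) hnv
  simp only at hanti
  rw [div_le_iff₀ hlogn]
  calc M.α * n * critRadius M n ω ^ d ≤ M.α * n * rhat M γ (v k) ^ d := by
        gcongr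
        exact critRadius_nonneg M n ω
    _ = γ * n * (Real.log (v k) / v k) := by
        rw [rhat_pow M hd (by linarith)]
        field_simp
    _ ≤ γ * n * (Real.log n / n) := by gcongr
    _ = γ * Real.log n := by field_simp

/-- Theorem 1(i): a.s. `limsup α n d_n^d / log n ≤ 1`. -/
theorem critRadius_limsup_le (hd : 2 ≤ d) [IsProbabilityMeasure P] (M : Model d P)
    {c : ℝ} (hc : (d : ℝ) < c)
    (hg : M.g =o[atTop] fun r : ℝ => r ^ (-c)) :
    ∀ᵐ ω ∂P, Filter.limsup
      (fun n : ℕ => M.α * n * critRadius M n ω ^ d / Real.log n) atTop ≤ 1 := by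
  have hall : ∀ᵐ ω ∂P, ∀ l : ℕ, ∀ᶠ n : ℕ in atTop,
      M.α * n * critRadius M n ω ^ d / Real.log n ≤ 1 + 1 / ((l : ℝ) + 1) :=
    ae_all_iff.2 fun l => ae_eventually_critRadius_le (by omega) M
      (lt_add_of_pos_right 1 Nat.one_div_pos_of_nat)
  filter_upwards [hall] with ω hω
  have hlim : Tendsto (fun l : ℕ => 1 + 1 / ((l : ℝ) + 1)) atTop (nhds 1) := by
    simpa using (tendsto_one_div_add_atTop_nhds_zero_nat (𝕜 := ℝ)).const_add 1
  refine ge_of_tendsto' hlim fun l => limsup_le_of_le ?_ (hω l)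
  refine IsCoboundedUnder.of_frequently_ge (a := 0) (Frequently.of_forall fun n => ?_)
  have := critRadius_nonneg M n ω
  have := Real.log_natCast_nonneg n
  have := M.α_pos
  positivity

end RCM
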